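/- arXiv:1106.4714 — 2 statements merged into one kernel-verified Lean document; each statement's English description precedes it below -/
import Mathlib

section
/- Fix β ≥ 0 and κ > 0 and write N = 𝒩q. Then for any sequences 𝒩_n → ∞ and K_n ∈ ℕ₀ with K_n/(𝒩_n q) → κ/2: (i) lim_n (1/N_n) ln 𝔼_{N_n,c}[ Z̃_{(𝒩_n,q)}(βJ) | {|J| = K_n} ] = 𝒫(β,κ,q), and (ii) lim_n (1/N_n) ln 𝔼_{N_n,c}[ Z̃_{(𝒩_n,q)}(βJ)² | {|J| = K_n} ] = max_{μ ∈ M_*([q]²)} φ^(2)(β,κ,q,μ), where φ^(2)(β,κ,q,μ) = s(μ) + (κ/2) ln( 1 − 2(1−e^{−β})/q + (1−e^{−β})² Σ_{(r₁,r₂)∈[q]²} μ({(r₁,r₂)})² ). -/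
open MeasureTheory Filter

/-- Poisson probability mass function with parameter `lam`. -/
noncomputable def poissonPMF (lam : ℝ) (k : ℕ) : ℝ :=
  Real.exp (-lam) * lam ^ k / (Nat.factorial k)

/-- Potts Hamiltonian `H_N(σ, J) = Σ_{i,j} J_{ij} δ(σ_i, σ_j)`. -/
noncomputable def potts.H (q N : ℕ) (σ : Fin N → Fin q) (J : Fin N → Fin N → ℝ) : ℝ :=
  ∑ i, ∑ j, J i j * (if σ i = σ j then (1 : ℝ) else 0)

/-- Partition function `Z_N(J)`. -/
noncomputable def potts.Z (q N : ℕ) (J : Fin N → Fin N → ℝ) : ℝ :=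
  ∑ σ : Fin N → Fin q, Real.exp (- potts.H q N σ J)

/-- Expectation over the Poissonian disorder: the entries `J_{ij}` are independent
Poisson random variables with means `c_{ij} / (2N)`. -/
noncomputable def potts.E (N : ℕ) (c : Fin N → Fin N → ℝ)
    (g : (Fin N → Fin N → ℕ) → ℝ) : ℝ :=
  ∑' J : Fin N → Fin N → ℕ,
    (∏ i, ∏ j, poissonPMF (c i j / (2 * N)) (J i j)) * g J

/-- Quenched pressure for a general nonnegative connectivity matrix `c`. -/
noncomputable def potts.pmat (q N : ℕ) (β : ℝ) (c : Fin N → Fin N → ℝ) : ℝ :=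
  potts.E N c (fun J => (1 / N) * Real.log (potts.Z q N (fun i j => β * (J i j : ℝ))))

/-- Quenched pressure for the constant connectivity matrix `c_{ij} ≡ c`. -/
noncomputable def potts.p (q N : ℕ) (β c : ℝ) : ℝ :=
  potts.pmat q N β (fun _ _ => c)

/-- Annealed pressure `𝒫(β, c) = ln q + (c/2) ln(1 - (1 - e^{-β})/q)`. -/
noncomputable def potts.annealed (q : ℕ) (β c : ℝ) : ℝ :=
  Real.log q + (c / 2) * Real.log (1 - (1 - Real.exp (-β)) / q)

/-- Conditional disorder expectation given the event `{|J| = K}`, where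
`|J| = Σ_{i,j} J_{ij}`. -/
noncomputable def condE (N : ℕ) (c : ℝ) (K : ℕ) (X : (Fin N → Fin N → ℕ) → ℝ) : ℝ :=
  potts.E N (fun _ _ => c) (fun J => if (∑ i, ∑ j, J i j) = K then X J else 0) /
    potts.E N (fun _ _ => c) (fun J => if (∑ i, ∑ j, J i j) = K then 1 else 0)

/-- `μ ∈ M_*([q]²)`: a probability measure on `[q]²` both of whose marginals are
uniform on `[q]`. -/
def IsBalancedMeasure (q : ℕ) (μ : Fin q → Fin q → ℝ) : Prop :=
  (∀ r₁ r₂, 0 ≤ μ r₁ r₂) ∧ (∀ r₁, ∑ r₂, μ r₁ r₂ = 1 / q) ∧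
    (∀ r₂, ∑ r₁, μ r₁ r₂ = 1 / q)

/-- Second-moment exponent `φ⁽²⁾(β, κ, q, μ) = s(μ) + (κ/2) ln(1 - 2(1-e^{-β})/q
+ (1-e^{-β})² Σ μ²)`. -/
noncomputable def phi2 (q : ℕ) (β κ : ℝ) (μ : Fin q → Fin q → ℝ) : ℝ :=
  (- ∑ r₁, ∑ r₂, μ r₁ r₂ * Real.log (μ r₁ r₂)) +
    (κ / 2) * Real.log (1 - 2 * (1 - Real.exp (-β)) / q +
      (1 - Real.exp (-β)) ^ 2 * ∑ r₁, ∑ r₂, (μ r₁ r₂) ^ 2)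

/-- Constrained (balanced-configuration) partition function `Z̃_{(𝒩,q)}(βJ)`. -/
noncomputable def Ztilde (q M : ℕ) (β : ℝ) (J : Fin (M * q) → Fin (M * q) → ℝ) : ℝ :=
  ∑ σ : Fin (M * q) → Fin q,
    (if ∀ s : Fin q, (Finset.univ.filter fun i => σ i = s).card = M then
      Real.exp (-β * potts.H q (M * q) σ J) else 0)

def cnt16 {N : ℕ} {A : Type*} [DecidableEq A] (f : Fin N → A) (a : A) : ℕ :=
  (Finset.univ.filter (fun i => f i = a)).card

lemma count16 {A : Type} [Fintype A] [DecidableEq A] (N : ℕ) (n : A → ℕ) (hn : ∑ a, n a = N) :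
    (Finset.univ.filter (fun f : Fin N → A => ∀ a, cnt16 f a = n a)).card
      = Nat.multinomial Finset.univ n := by
  have h1 : (∑ a : A, (MvPolynomial.X a : MvPolynomial A ℕ)) ^ N
      = ∑ f : Fin N → A, MvPolynomial.monomial (∑ i, Finsupp.single (f i) 1) 1 := by
    have := Finset.prod_univ_sum (fun _ : Fin N => (Finset.univ : Finset A))
      (fun _ a => (MvPolynomial.X a : MvPolynomial A ℕ))
    simp only [Finset.prod_const, Finset.card_univ, Fintype.card_fin, Fintype.piFinset_univ] at this
    rw [this]
    refine Finset.sum_congr rfl fun f _ => ?_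
    rw [MvPolynomial.monomial_sum_one]
    rfl
  have h2 := Finset.sum_pow_eq_sum_piAntidiag (Finset.univ : Finset A)
    (fun a => (MvPolynomial.X a : MvPolynomial A ℕ)) N
  rw [h1] at h2
  have h3 := congrArg (MvPolynomial.coeff (Finsupp.equivFunOnFinite.symm n)) h2
  rw [MvPolynomial.coeff_sum, MvPolynomial.coeff_sum] at h3
  have h4 : ∀ k : A → ℕ, (∏ i, (MvPolynomial.X i : MvPolynomial A ℕ) ^ k i)
      = MvPolynomial.monomial (Finsupp.equivFunOnFinite.symm k) 1 := by
    intro k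
    rw [MvPolynomial.monomial_eq]
    simp [Finsupp.prod_fintype]
  have h5 : ∀ k : A → ℕ, MvPolynomial.coeff (Finsupp.equivFunOnFinite.symm n)
     ((Nat.multinomial Finset.univ k : MvPolynomial A ℕ) *
        ∏ i, (MvPolynomial.X i : MvPolynomial A ℕ) ^ k i) =
      if k = n then Nat.multinomial Finset.univ n else 0 := by
    intro k
    rw [h4, ← map_natCast (MvPolynomial.C : ℕ →+* MvPolynomial A ℕ), MvPolynomial.coeff_C_mul,
      MvPolynomial.coeff_monomial]
    by_cases h : k = n
    · subst h; simp
    · simp [h]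
  rw [Finset.sum_congr rfl (fun k _ => h5 k), Finset.sum_ite_eq', if_pos (by simp [hn])] at h3
  rw [← h3, Finset.card_filter]
  refine Finset.sum_congr rfl fun f _ => ?_
  rw [MvPolynomial.coeff_monomial]
  refine if_congr ?_ rfl rfl
  rw [Finsupp.ext_iff]
  refine forall_congr' fun a => ?_
  simp [Finsupp.finsetSum_apply, Finsupp.single_apply, cnt16]

lemma stir16 (n : ℕ) : (n : ℝ) * Real.log n - n ≤ Real.log (n.factorial) ∧
    Real.log (n.factorial) ≤ (n : ℝ) * Real.log n - n + (1 + 2 * Real.log (n + 1)) := by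
  constructor
  · rcases Nat.eq_zero_or_pos n with rfl | h
    · simp
    have hn : (0:ℝ) < n := by exact_mod_cast h
    have := Real.pow_div_factorial_le_exp (n:ℝ) hn.le n
    have hf : (0:ℝ) < n.factorial := by exact_mod_cast n.factorial_pos
    have h2 := Real.log_le_log (by positivity) this
    rw [Real.log_exp, Real.log_div (by positivity) (by positivity), Real.log_pow] at h2
    linarith
  · induction n with
    | zero => simp
    | succ n ih =>
      rw [Nat.factorial_succ]
      push_cast
      have hf : (0:ℝ) < n.factorial := by exact_mod_cast n.factorial_pos
      rw [Real.log_mul (by positivity) (by positivity)]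
      rcases Nat.eq_zero_or_pos n with rfl | h
      · norm_num
        have := Real.log_nonneg (show (1:ℝ) ≤ 2 by norm_num)
        linarith
      have hn : (0:ℝ) < n := by exact_mod_cast h
      have h3 : Real.log (n + 1 + 1) - Real.log (n+1) ≥ 1 / (n + 2) := by
        have := Real.one_sub_inv_le_log_of_pos (show (0:ℝ) < (n+1+1)/(n+1) by positivity)
        rw [Real.log_div (by positivity) (by positivity)] at this
        refine le_trans (le_of_eq ?_) this
        field_simp
        ring
      have h4 : Real.log (n + 1) - Real.log n ≥ 1 / (n + 1) := by
        have := Real.one_sub_inv_le_log_of_pos (show (0:ℝ) < (n+1)/n by positivity)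
        rw [Real.log_div (by positivity) (by positivity)] at this
        refine le_trans (le_of_eq ?_) this
        field_simp
        ring
      have h5 : (n:ℝ) * (1/(n+1)) ≤ n * (Real.log (n + 1) - Real.log n) :=
        mul_le_mul_of_nonneg_left h4 hn.le
      have h6 : (0:ℝ) ≤ n * (1/(n+1)) - 1 + 2 * (1/(n+2)) := by
        have : (n:ℝ) * (1/(n+1)) - 1 + 2 * (1/(n+2)) = n / ((n+1)*(n+2)) := by
          field_simp; ring
        rw [this]; positivity
      nlinarith

noncomputable def ent16 {A : Type} [Fintype A] (μ : A → ℝ) : ℝ := - ∑ a, μ a * Real.log (μ a)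

lemma multi16 {A : Type} [Fintype A] [DecidableEq A] (N : ℕ) (hN : 0 < N) (n : A → ℕ)
    (hn : ∑ a, n a = N) :
    |Real.log (Nat.multinomial Finset.univ n) - N * ent16 (fun a => (n a : ℝ) / N)|
      ≤ (Fintype.card A + 1) * (1 + 2 * Real.log (N + 1)) := by
  have hN' : (0:ℝ) < N := by exact_mod_cast hN
  have h1 : (N : ℝ) * ent16 (fun a => (n a : ℝ) / N)
      = N * Real.log N - ∑ a, (n a : ℝ) * Real.log (n a) := by
    have : ∀ a, (N:ℝ) * ((n a : ℝ) / N * Real.log ((n a : ℝ) / N))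
        = n a * Real.log (n a) - n a * Real.log N := by
      intro a
      rcases Nat.eq_zero_or_pos (n a) with h | h
      · simp [h]
      · have : (0:ℝ) < n a := by exact_mod_cast h
        rw [Real.log_div (by positivity) (by positivity)]
        field_simp
    rw [ent16, mul_neg, Finset.mul_sum, Finset.sum_congr rfl (fun a _ => this a),
      Finset.sum_sub_distrib, ← Finset.sum_mul, ← Nat.cast_sum, hn]
    ring
  have h2 : Real.log (Nat.multinomial Finset.univ n)
      = Real.log (N.factorial) - ∑ a, Real.log ((n a).factorial) := by
    have h := Nat.multinomial_spec Finset.univ n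
    rw [hn] at h
    have h' : ((∏ i, ((n i).factorial : ℝ)) * (Nat.multinomial Finset.univ n : ℝ)) = N.factorial := by
      exact_mod_cast h
    have hm : ((Nat.multinomial Finset.univ n : ℕ) : ℝ) ≠ 0 := by
      exact_mod_cast (Nat.multinomial_pos Finset.univ n).ne'
    have hf : ∀ a ∈ Finset.univ, ((n a).factorial : ℝ) ≠ 0 := fun a _ => by
      exact_mod_cast (n a).factorial_ne_zero
    rw [← h', Real.log_mul (Finset.prod_ne_zero_iff.2 hf) hm, Real.log_prod hf]
    ring
  have hle : ∀ a, n a ≤ N := fun a => by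
    rw [← hn]; exact Finset.single_le_sum (f := n) (fun _ _ => Nat.zero_le _) (Finset.mem_univ a)
  have h3 : ∑ a, ((n a : ℝ) * Real.log (n a) - n a) ≤ ∑ a, Real.log ((n a).factorial) :=
    Finset.sum_le_sum fun a _ => (stir16 (n a)).1
  have h4 : ∑ a, Real.log ((n a).factorial) ≤
      ∑ a, ((n a : ℝ) * Real.log (n a) - n a + (1 + 2 * Real.log (N + 1))) :=
    Finset.sum_le_sum fun a _ => (stir16 (n a)).2.trans (by
      have : (n a : ℝ) ≤ N := by exact_mod_cast hle a
      gcongr)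
  have hs : ∑ a, (n a : ℝ) = N := by exact_mod_cast hn
  rw [Finset.sum_sub_distrib, hs] at h3
  rw [Finset.sum_add_distrib, Finset.sum_sub_distrib, hs, Finset.sum_const, Finset.card_univ,
    nsmul_eq_mul] at h4
  have h5 := stir16 N
  have h6 : 0 ≤ Real.log ((N:ℝ) + 1) := Real.log_nonneg (by linarith)
  have h7 : (0:ℝ) ≤ Fintype.card A * (1 + 2 * Real.log (N + 1)) := by positivity
  rw [h1, h2, abs_le]
  constructor <;> linarith [h5.1, h5.2]

lemma E16 (N : ℕ) (c : ℝ) (K : ℕ) (X : (Fin N → Fin N → ℕ) → ℝ) :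
    potts.E N (fun _ _ => c) (fun J => if (∑ i, ∑ j, J i j) = K then X J else 0) =
    (Real.exp (-(c / (2 * N))) ^ (N * N) * (c / (2 * N)) ^ K / K.factorial) *
      ∑ k ∈ Finset.piAntidiag (Finset.univ : Finset (Fin N × Fin N)) K,
        (Nat.multinomial Finset.univ k : ℝ) * X (fun i j => k (i, j)) := by
  unfold potts.E
  set l := c / (2 * (N:ℝ))
  rw [← (Equiv.curry (Fin N) (Fin N) ℕ).tsum_eq]
  rw [tsum_eq_sum (s := Finset.piAntidiag (Finset.univ : Finset (Fin N × Fin N)) K)]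
  · rw [Finset.mul_sum]
    refine Finset.sum_congr rfl fun k hk => ?_
    have hk' : ∑ a, k a = K := by simpa using hk
    have e1 : ∑ i, ∑ j, (Equiv.curry (Fin N) (Fin N) ℕ) k i j = K := by
      rw [← hk', Fintype.sum_prod_type]; rfl
    beta_reduce
    rw [if_pos e1]
    have e2 : ∏ i, ∏ j, poissonPMF l ((Equiv.curry (Fin N) (Fin N) ℕ) k i j)
        = ∏ a, poissonPMF l (k a) := by rw [Fintype.prod_prod_type]; rfl
    have e3 : ∏ a, poissonPMF l (k a) = Real.exp (-l) ^ (N * N) * l ^ K / K.factorial *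
        (Nat.multinomial Finset.univ k : ℝ) := by
      have h := Nat.multinomial_spec Finset.univ k
      rw [hk'] at h
      have h' : ((∏ i, ((k i).factorial : ℝ)) * (Nat.multinomial Finset.univ k : ℝ))
        = K.factorial := by exact_mod_cast h
      have hm : ((Nat.multinomial Finset.univ k : ℕ) : ℝ) ≠ 0 := by
        exact_mod_cast (Nat.multinomial_pos Finset.univ k).ne'
      have hf : (∏ i, ((k i).factorial : ℝ)) ≠ 0 := Finset.prod_ne_zero_iff.2 fun a _ => by
        exact_mod_cast (k a).factorial_ne_zero
      unfold poissonPMF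
      rw [Finset.prod_div_distrib, Finset.prod_mul_distrib, Finset.prod_pow_eq_pow_sum, hk',
        Finset.prod_const, Finset.card_univ, Fintype.card_prod, Fintype.card_fin, ← h']
      field_simp
    rw [e2, e3, mul_assoc]
    rfl
  · intro k hk
    beta_reduce
    rw [if_neg, mul_zero]
    intro h
    apply hk
    rw [Finset.mem_piAntidiag]
    refine ⟨?_, by simp⟩
    rw [← h, Fintype.sum_prod_type]; rfl

lemma condE16 {S : Type} (s : Finset S) (N : ℕ) (hN : 0 < N) (c : ℝ) (hc : 0 < c) (K : ℕ)
    (X : (Fin N → Fin N → ℕ) → ℝ) (x : S → Fin N → Fin N → ℝ)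
    (hX : ∀ J, X J = ∑ σ ∈ s, ∏ i, ∏ j, x σ i j ^ J i j) :
    condE N c K X = ∑ σ ∈ s, ((∑ i, ∑ j, x σ i j) / (N:ℝ) ^ 2) ^ K := by
  have hN' : (0:ℝ) < N := by exact_mod_cast hN
  unfold condE
  rw [E16, E16, mul_div_mul_left _ _ (by positivity)]
  have key : ∀ y : Fin N → Fin N → ℝ,
      ∑ k ∈ Finset.piAntidiag (Finset.univ : Finset (Fin N × Fin N)) K,
        (Nat.multinomial Finset.univ k : ℝ) * ∏ i, ∏ j, y i j ^ k (i, j)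
      = (∑ i, ∑ j, y i j) ^ K := by
    intro y
    have := Finset.sum_pow_eq_sum_piAntidiag (Finset.univ : Finset (Fin N × Fin N))
      (fun a => y a.1 a.2) K
    rw [Fintype.sum_prod_type] at this
    rw [this]
    refine Finset.sum_congr rfl fun k _ => ?_
    rw [Fintype.prod_prod_type]
  have k1 := key (fun _ _ => 1)
  simp only [one_pow, Finset.prod_const_one, Finset.sum_const, Finset.card_univ, Fintype.card_fin,
    nsmul_eq_mul, mul_one] at k1
  simp only [mul_one]
  rw [k1]
  simp only [hX, Finset.mul_sum]
  rw [Finset.sum_comm, Finset.sum_div]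
  refine Finset.sum_congr rfl fun σ _ => ?_
  rw [key, div_pow, sq]

lemma pair16 {N : ℕ} {A : Type} [Fintype A] [DecidableEq A] (f : Fin N → A) :
    ∑ i, ∑ j, (if f i = f j then (1:ℝ) else 0) = ∑ a, (cnt16 f a : ℝ) ^ 2 := by
  have : ∀ a, (cnt16 f a : ℝ) = ∑ i, if f i = a then (1:ℝ) else 0 := by
    intro a; simp [cnt16]
  simp_rw [this, sq, Finset.sum_mul_sum]
  rw [Finset.sum_comm]
  conv_rhs => rw [Finset.sum_comm]
  rw [Finset.sum_comm]
  refine Finset.sum_congr rfl fun i _ => ?_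
  rw [Finset.sum_comm]
  refine Finset.sum_congr rfl fun j _ => ?_
  simp [eq_comm]

lemma cnt_sum16 {N : ℕ} {A : Type} [Fintype A] [DecidableEq A] (f : Fin N → A) :
    ∑ a, cnt16 f a = N := by
  have := Finset.card_eq_sum_card_fiberwise (s := (Finset.univ : Finset (Fin N))) (f := f)
    (t := Finset.univ) (by simp)
  simpa [cnt16] using this.symm

lemma marg16 {N q : ℕ} (f : Fin N → Fin q × Fin q) (r : Fin q) :
    cnt16 (fun i => (f i).1) r = ∑ s, cnt16 f (r, s) ∧
    cnt16 (fun i => (f i).2) r = ∑ s, cnt16 f (s, r) := by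
  constructor
  · have := Finset.card_eq_sum_card_fiberwise
      (s := (Finset.univ.filter (fun i : Fin N => (f i).1 = r))) (f := fun i => (f i).2)
      (t := Finset.univ) (by simp)
    rw [cnt16, this]
    refine Finset.sum_congr rfl fun s _ => ?_
    rw [Finset.filter_filter, cnt16]
    simp [Prod.ext_iff]
  · have := Finset.card_eq_sum_card_fiberwise
      (s := (Finset.univ.filter (fun i : Fin N => (f i).2 = r))) (f := fun i => (f i).1)
      (t := Finset.univ) (by simp)
    rw [cnt16, this]
    refine Finset.sum_congr rfl fun s _ => ?_
    rw [Finset.filter_filter, cnt16]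
    simp [Prod.ext_iff, and_comm]

noncomputable def bal16 (q M : ℕ) : Finset (Fin (M * q) → Fin q) :=
  Finset.univ.filter (fun σ => ∀ s, cnt16 σ s = M)

lemma Z16 (q M : ℕ) (β : ℝ) (J : Fin (M * q) → Fin (M * q) → ℕ) :
    Ztilde q M β (fun a b => (J a b : ℝ)) = ∑ σ ∈ bal16 q M, ∏ i, ∏ j,
      (1 - (1 - Real.exp (-β)) * (if σ i = σ j then (1:ℝ) else 0)) ^ J i j := by
  rw [Ztilde, bal16, Finset.sum_filter]
  refine Finset.sum_congr rfl fun σ _ => ?_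
  refine if_congr Iff.rfl ?_ rfl
  rw [potts.H, Finset.mul_sum, Real.exp_sum]
  refine Finset.prod_congr rfl fun i _ => ?_
  rw [Finset.mul_sum, Real.exp_sum]
  refine Finset.prod_congr rfl fun j _ => ?_
  split_ifs with h
  · rw [mul_one, mul_one, sub_sub_cancel, ← Real.exp_nat_mul, mul_comm]
  · simp

lemma first16 (q M : ℕ) (hq : 0 < q) (hM : 0 < M) (β c : ℝ) (hc : 0 < c) (K : ℕ) :
    condE (M * q) c K (fun J => Ztilde q M β (fun a b => (J a b : ℝ))) =
      (Nat.multinomial Finset.univ (fun _ : Fin q => M) : ℝ) * (1 - (1 - Real.exp (-β)) / q) ^ K := by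
  rw [condE16 (bal16 q M) (M * q) (by positivity) c hc K _ _ (Z16 q M β)]
  have hcard : (bal16 q M).card = Nat.multinomial Finset.univ (fun _ : Fin q => M) := by
    rw [← count16 (M * q) (fun _ : Fin q => M) (by simp [mul_comm]), bal16]
    congr!
  rw [← hcard, ← nsmul_eq_mul]
  refine Finset.sum_eq_card_nsmul fun σ hσ => ?_
  congr 1
  have hσ' : ∀ s, cnt16 σ s = M := by simpa [bal16] using hσ
  simp only [Finset.sum_sub_distrib, ← Finset.mul_sum, pair16, hσ']
  have : (0:ℝ) < q := by exact_mod_cast hq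
  have : (0:ℝ) < M := by exact_mod_cast hM
  simp
  field_simp

noncomputable def bal2 (q M : ℕ) : Finset (Fin (M * q) → Fin q × Fin q) :=
  Finset.univ.filter (fun ρ => (∀ s, cnt16 (fun i => (ρ i).1) s = M) ∧
    (∀ s, cnt16 (fun i => (ρ i).2) s = M))

noncomputable def F16 (q : ℕ) (w : ℝ) (μ : Fin q × Fin q → ℝ) : ℝ :=
  1 - 2 * w / q + w ^ 2 * ∑ a, μ a ^ 2

lemma second16 (q M : ℕ) (hq : 0 < q) (hM : 0 < M) (β c : ℝ) (hc : 0 < c) (K : ℕ) :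
    condE (M * q) c K (fun J => Ztilde q M β (fun a b => (J a b : ℝ)) ^ 2) =
      ∑ ρ ∈ bal2 q M, F16 q (1 - Real.exp (-β))
        (fun a => (cnt16 ρ a : ℝ) / ((M : ℝ) * q)) ^ K := by
  set w := 1 - Real.exp (-β) with hw
  rw [condE16 (bal2 q M) (M * q) (by positivity) c hc K _
    (fun ρ i j => (1 - w * (if (ρ i).1 = (ρ j).1 then (1:ℝ) else 0)) *
      (1 - w * (if (ρ i).2 = (ρ j).2 then (1:ℝ) else 0)))]
  · refine Finset.sum_congr rfl fun ρ hρ => ?_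
    congr 1
    have hρ' : (∀ s, cnt16 (fun i => (ρ i).1) s = M) ∧ (∀ s, cnt16 (fun i => (ρ i).2) s = M) := by
      simpa [bal2] using hρ
    have h1 := pair16 (fun i => (ρ i).1)
    have h2 := pair16 (fun i => (ρ i).2)
    have h3 := pair16 ρ
    simp only [hρ'.1] at h1
    simp only [hρ'.2] at h2
    have e : ∀ i j, (1 - w * (if (ρ i).1 = (ρ j).1 then (1:ℝ) else 0)) *
      (1 - w * (if (ρ i).2 = (ρ j).2 then (1:ℝ) else 0)) =
      1 - w * (if (ρ i).1 = (ρ j).1 then (1:ℝ) else 0) - w * (if (ρ i).2 = (ρ j).2 then (1:ℝ) else 0)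
       + w ^ 2 * (if ρ i = ρ j then (1:ℝ) else 0) := by
      intro i j
      by_cases ha : (ρ i).1 = (ρ j).1 <;> by_cases hb : (ρ i).2 = (ρ j).2 <;>
        simp [ha, hb, Prod.ext_iff] <;> ring
    simp only [e, Finset.sum_add_distrib, Finset.sum_sub_distrib, ← Finset.mul_sum]
    rw [h1, h2, h3]
    have : (0:ℝ) < q := by exact_mod_cast hq
    have : (0:ℝ) < M := by exact_mod_cast hM
    simp only [F16, div_pow, ← Finset.sum_div]
    simp
    field_simp
    ring
  · intro J
    rw [Z16, sq, Finset.sum_mul_sum, ← Finset.sum_product']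
    refine Finset.sum_equiv (Equiv.arrowProdEquivProdArrow _ _ _).symm ?_ ?_
    · rintro ⟨σ, τ⟩
      simp [bal16, bal2, Equiv.arrowProdEquivProdArrow]
    · rintro ⟨σ, τ⟩ _
      simp only [← Finset.prod_mul_distrib, ← mul_pow]
      rfl

lemma approx16 (q : ℕ) (hq : 0 < q) (μ : Fin q → Fin q → ℝ) (hμ : IsBalancedMeasure q μ) :
    ∃ n : ℕ → (Fin q × Fin q → ℕ), (∀ m r, ∑ s, n m (r, s) = m ∧ ∑ s, n m (s, r) = m) ∧
      ∀ a, Tendsto (fun m : ℕ => (n m a : ℝ) / ((m : ℝ) * q)) atTop (nhds (μ a.1 a.2)) := by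
  obtain ⟨h0, h1, h2⟩ := hμ
  have hq' : (0:ℝ) < q := by exact_mod_cast hq
  have hD : (Matrix.of fun i j => (q:ℝ) * μ i j) ∈ doublyStochastic ℝ (Fin q) := by
    rw [mem_doublyStochastic_iff_sum]
    refine ⟨fun i j => ?_, fun i => ?_, fun j => ?_⟩
    · simp only [Matrix.of_apply]; exact mul_nonneg hq'.le (h0 i j)
    · simp only [Matrix.of_apply, ← Finset.mul_sum, h1]; field_simp
    · simp only [Matrix.of_apply, ← Finset.mul_sum, h2]; field_simp
  obtain ⟨w, hw0, hw1, hw⟩ := exists_eq_sum_perm_of_mem_doublyStochastic hD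
  let k : ℕ → Equiv.Perm (Fin q) → ℕ := fun m π =>
    if π = 1 then m - ∑ π ∈ Finset.univ.erase (1 : Equiv.Perm (Fin q)), ⌊w π * m⌋₊
    else ⌊w π * m⌋₊
  have hle : ∀ m : ℕ, ∑ π ∈ Finset.univ.erase (1 : Equiv.Perm (Fin q)), ⌊w π * m⌋₊ ≤ m := by
    intro m
    have : (∑ π ∈ Finset.univ.erase (1 : Equiv.Perm (Fin q)), (⌊w π * m⌋₊ : ℝ)) ≤ m := by
      calc _ ≤ ∑ π ∈ Finset.univ.erase (1 : Equiv.Perm (Fin q)), w π * m :=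
            Finset.sum_le_sum fun π _ => Nat.floor_le (mul_nonneg (hw0 π) (Nat.cast_nonneg m))
        _ ≤ ∑ π, w π * m := Finset.sum_le_sum_of_subset_of_nonneg (Finset.erase_subset _ _)
            fun π _ _ => mul_nonneg (hw0 π) (Nat.cast_nonneg m)
        _ = m := by rw [← Finset.sum_mul, hw1, one_mul]
    exact_mod_cast this
  have hk1 : ∀ m, k m 1 = m - ∑ π ∈ Finset.univ.erase (1 : Equiv.Perm (Fin q)), ⌊w π * m⌋₊ :=
    fun m => if_pos rfl
  have hk2 : ∀ m π, π ≠ 1 → k m π = ⌊w π * m⌋₊ := fun m π h => if_neg h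
  have hsum : ∀ m, ∑ π, k m π = m := by
    intro m
    rw [← Finset.add_sum_erase _ _ (Finset.mem_univ 1), hk1,
      Finset.sum_congr rfl (fun π hπ => hk2 m π (Finset.ne_of_mem_erase hπ))]
    have := hle m
    omega
  have hfl : ∀ π, Tendsto (fun m : ℕ => (⌊w π * m⌋₊ : ℝ) / m) atTop (nhds (w π)) := fun π =>
    (tendsto_nat_floor_mul_div_atTop (hw0 π)).comp tendsto_natCast_atTop_atTop
  have hlim : ∀ π, Tendsto (fun m : ℕ => (k m π : ℝ) / m) atTop (nhds (w π)) := by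
    intro π
    by_cases h : π = 1
    · subst h
      have e : w 1 = 1 - ∑ π ∈ Finset.univ.erase (1 : Equiv.Perm (Fin q)), w π := by
        rw [← hw1, ← Finset.add_sum_erase _ _ (Finset.mem_univ 1)]; ring
      rw [e]
      refine Tendsto.congr' ?_ ((tendsto_const_nhds (x := (1:ℝ))).sub
        (tendsto_finsetSum (Finset.univ.erase (1 : Equiv.Perm (Fin q))) fun π _ => hfl π))
      filter_upwards [eventually_gt_atTop 0] with m hm
      have : (0:ℝ) < m := by exact_mod_cast hm
      rw [hk1, Nat.cast_sub (hle m), ← Finset.sum_div]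
      push_cast
      rw [sub_div, div_self this.ne']
    · simp only [hk2 _ π h]; exact hfl π
  refine ⟨fun m a => ∑ π : Equiv.Perm (Fin q), k m π * (if π a.1 = a.2 then 1 else 0), ?_, ?_⟩
  · intro m r
    constructor
    · rw [Finset.sum_comm]
      simp [hsum]
    · rw [Finset.sum_comm]
      simp only [← Finset.mul_sum]
      simp only [← Equiv.eq_symm_apply]
      simp [hsum]
  · rintro ⟨r, s⟩
    have e : μ r s = (∑ π : Equiv.Perm (Fin q), w π * (if π r = s then 1 else 0)) / q := by
      have := congrFun (congrFun hw r) s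
      rw [Matrix.sum_apply] at this
      simp only [Matrix.smul_apply, smul_eq_mul, Equiv.Perm.permMatrix, PEquiv.toMatrix_apply, Equiv.toPEquiv_apply,
        Matrix.of_apply, Option.mem_def, Option.some.injEq] at this
      rw [this]; field_simp
    simp only
    rw [e]
    have := (tendsto_finsetSum (Finset.univ : Finset (Equiv.Perm (Fin q)))
      fun π _ => (hlim π).mul_const (if π r = s then (1:ℝ) else 0)).div_const (q:ℝ)
    refine this.congr fun m => ?_
    push_cast
    rw [Finset.sum_div, Finset.sum_div]
    refine Finset.sum_congr rfl fun π _ => ?_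
    rw [div_mul_eq_mul_div, div_div]

lemma err16 : Tendsto (fun N : ℕ => (1 + 2 * Real.log ((N:ℝ) + 1)) / N) atTop (nhds 0) := by
  have h1 : Tendsto (fun x : ℝ => Real.log x / x) atTop (nhds 0) := by
    simpa using Real.tendsto_pow_log_div_mul_add_atTop 1 0 1 (by norm_num)
  have h2 : Tendsto (fun N : ℕ => ((N:ℝ) + 1)) atTop atTop :=
    tendsto_atTop_add_const_right _ _ tendsto_natCast_atTop_atTop
  have h3 := h1.comp h2
  have h4 : Tendsto (fun N : ℕ => 1 / (N:ℝ)) atTop (nhds 0) := tendsto_one_div_atTop_nhds_zero_nat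
  have h5 := h4.add ((h3.const_mul 2).mul (h4.const_add 1))
  simp only [mul_zero, zero_mul, add_zero] at h5
  refine h5.congr' ?_
  filter_upwards [eventually_gt_atTop 0] with m hm
  have : (0:ℝ) < m := by exact_mod_cast hm
  simp only [Function.comp]
  field_simp

lemma Fbd16 (q : ℕ) (hq : 2 ≤ q) (w : ℝ) (hw0 : 0 ≤ w) (hw1 : w < 1) (μ : Fin q → Fin q → ℝ)
    (hμ : IsBalancedMeasure q μ) :
    (1 - w / q) ^ 2 ≤ F16 q w (fun a => μ a.1 a.2) ∧ F16 q w (fun a => μ a.1 a.2) ≤ 1 := by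
  obtain ⟨h0, h1, h2⟩ := hμ
  have hq' : (0:ℝ) < q := by positivity
  have hs : ∑ a : Fin q × Fin q, μ a.1 a.2 = 1 := by
    rw [Fintype.sum_prod_type]; simp only [h1]; simp; field_simp
  have hl : 1 / (q:ℝ) ^ 2 ≤ ∑ a : Fin q × Fin q, μ a.1 a.2 ^ 2 := by
    have := sq_sum_le_card_mul_sum_sq (s := (Finset.univ : Finset (Fin q × Fin q)))
      (f := fun a => μ a.1 a.2)
    rw [hs] at this
    simp at this
    rw [div_le_iff₀ (by positivity)]
    nlinarith
  have hu : ∑ a : Fin q × Fin q, μ a.1 a.2 ^ 2 ≤ 1 / q := by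
    have : ∀ a : Fin q × Fin q, μ a.1 a.2 ^ 2 ≤ μ a.1 a.2 * (1 / q) := by
      intro a
      rw [sq]
      refine mul_le_mul_of_nonneg_left ?_ (h0 _ _)
      rw [← h1 a.1]
      exact Finset.single_le_sum (f := μ a.1) (fun s _ => h0 _ s) (Finset.mem_univ _)
    refine (Finset.sum_le_sum fun a _ => this a).trans ?_
    rw [← Finset.sum_mul, hs, one_mul]
  unfold F16
  constructor
  · have := mul_le_mul_of_nonneg_left hl (sq_nonneg w)
    have e : (1 - w / q) ^ 2 = 1 - 2 * w / q + w ^ 2 * (1 / (q:ℝ)^2) := by field_simp; ring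
    linarith
  · have := mul_le_mul_of_nonneg_left hu (sq_nonneg w)
    have e : 2 * w / q - w ^ 2 * (1/q) = w * (2 - w) / q := by field_simp
    have : 0 ≤ w * (2 - w) / q := by
      apply div_nonneg _ hq'.le; nlinarith
    linarith

lemma ent_le16 {A : Type} [Fintype A] (μ : A → ℝ) (h0 : ∀ a, 0 ≤ μ a) :
    ent16 μ ≤ Fintype.card A := by
  rw [ent16, ← Finset.sum_neg_distrib]
  have : ∀ a ∈ (Finset.univ : Finset A), -(μ a * Real.log (μ a)) ≤ 1 := by
    intro a _
    rcases (h0 a).eq_or_lt with h | h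
    · rw [← h]; simp
    · have := mul_le_mul_of_nonneg_left (Real.one_sub_inv_le_log_of_pos h) h.le
      rw [mul_sub, mul_inv_cancel₀ h.ne'] at this
      linarith
  simpa using Finset.sum_le_card_nsmul _ _ 1 this

lemma phi16 (q : ℕ) (β κ : ℝ) (μ : Fin q → Fin q → ℝ) :
    phi2 q β κ μ = ent16 (fun a : Fin q × Fin q => μ a.1 a.2) +
      κ / 2 * Real.log (F16 q (1 - Real.exp (-β)) (fun a => μ a.1 a.2)) := by
  simp only [phi2, ent16, F16, Fintype.sum_prod_type]

lemma bddphi16 (q : ℕ) (hq : 2 ≤ q) (β κ : ℝ) (hβ : 0 ≤ β) (hκ : 0 < κ) :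
    BddAbove {y : ℝ | ∃ μ : Fin q → Fin q → ℝ, IsBalancedMeasure q μ ∧ y = phi2 q β κ μ} := by
  refine ⟨Fintype.card (Fin q × Fin q), ?_⟩
  rintro y ⟨μ, hμ, rfl⟩
  rw [phi16]
  have h1 := ent_le16 (fun a : Fin q × Fin q => μ a.1 a.2) (fun a => hμ.1 _ _)
  have h2 := Fbd16 q hq (1 - Real.exp (-β)) (by simp [hβ]) (by simp [Real.exp_pos]) μ hμ
  have h3 := Real.log_nonpos ((sq_nonneg _).trans h2.1) h2.2
  nlinarith

lemma balm16 (q M : ℕ) (hq : 0 < q) (hM : 0 < M) (n : Fin q × Fin q → ℕ)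
    (hn : ∀ r, ∑ s, n (r, s) = M ∧ ∑ s, n (s, r) = M) :
    IsBalancedMeasure q (fun r s => (n (r, s) : ℝ) / ((M : ℝ) * q)) := by
  have : (0:ℝ) < q := by exact_mod_cast hq
  have : (0:ℝ) < M := by exact_mod_cast hM
  refine ⟨fun r s => by positivity, fun r => ?_, fun s => ?_⟩
  · rw [← Finset.sum_div, ← Nat.cast_sum, (hn r).1]; field_simp
  · rw [← Finset.sum_div, ← Nat.cast_sum, (hn s).2]; field_simp

lemma summ16 (q M : ℕ) (n : Fin q × Fin q → ℕ)
    (hn : ∀ r, ∑ s, n (r, s) = M ∧ ∑ s, n (s, r) = M) : ∑ a, n a = M * q := by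
  rw [Fintype.sum_prod_type]
  simp [hn, mul_comm]

lemma lower16 (q M : ℕ) (hq : 2 ≤ q) (hM : 0 < M) (w : ℝ) (hw0 : 0 ≤ w) (hw1 : w < 1) (K : ℕ)
    (n : Fin q × Fin q → ℕ) (hn : ∀ r, ∑ s, n (r, s) = M ∧ ∑ s, n (s, r) = M) :
    ((M : ℝ) * q) * ent16 (fun a => (n a : ℝ) / ((M : ℝ) * q))
      + K * Real.log (F16 q w (fun a => (n a : ℝ) / ((M : ℝ) * q)))
      - (q * q + 1) * (1 + 2 * Real.log (((M * q : ℕ) : ℝ) + 1)) ≤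
    Real.log (∑ ρ ∈ bal2 q M, F16 q w (fun a => (cnt16 ρ a : ℝ) / ((M : ℝ) * q)) ^ K) := by
  have hq0 : 0 < q := by omega
  have hbal := balm16 q M hq0 hM n hn
  have hF := Fbd16 q hq w hw0 hw1 _ hbal
  have hq' : (2:ℝ) ≤ q := by exact_mod_cast hq
  have hpos : 0 < (1 - w / q) ^ 2 := by
    have : w / q < 1 := by rw [div_lt_one (by linarith)]; linarith
    have : 0 < 1 - w / q := by linarith
    positivity
  simp only [Prod.mk.eta] at hF
  set F := F16 q w (fun a => (n a : ℝ) / ((M : ℝ) * q)) with hFdef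
  have hFp : 0 < F := hpos.trans_le hF.1
  have hsum := summ16 q M n hn
  have h1 := multi16 (M * q) (by positivity) n hsum
  have hle : (Nat.multinomial Finset.univ n : ℝ) * F ^ K ≤
      ∑ ρ ∈ bal2 q M, F16 q w (fun a => (cnt16 ρ a : ℝ) / ((M : ℝ) * q)) ^ K := by
    rw [← count16 (M * q) n hsum, ← nsmul_eq_mul]
    have : ∑ ρ ∈ Finset.univ.filter (fun f : Fin (M * q) → Fin q × Fin q => ∀ a, cnt16 f a = n a),
        F16 q w (fun a => (cnt16 ρ a : ℝ) / ((M : ℝ) * q)) ^ K =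
        (Finset.univ.filter (fun f : Fin (M * q) → Fin q × Fin q => ∀ a, cnt16 f a = n a)).card
          • F ^ K := by
      refine Finset.sum_eq_card_nsmul fun ρ hρ => ?_
      have : ∀ a, cnt16 ρ a = n a := by simpa using hρ
      simp only [this, hFdef]
    rw [← this]
    refine Finset.sum_le_sum_of_subset_of_nonneg ?_ ?_
    · intro ρ hρ
      have : ∀ a, cnt16 ρ a = n a := by simpa using hρ
      simp only [bal2, Finset.mem_filter, Finset.mem_univ, true_and, (marg16 ρ _).1,
        (marg16 ρ _).2, this]
      exact ⟨fun s => (hn s).1, fun s => (hn s).2⟩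
    · intro ρ hρ _
      have hb : (∀ s, cnt16 (fun i => (ρ i).1) s = M) ∧ (∀ s, cnt16 (fun i => (ρ i).2) s = M) := by
        simpa [bal2] using hρ
      have := Fbd16 q hq w hw0 hw1 _ (balm16 q M hq0 hM (cnt16 ρ) (fun r =>
        ⟨by rw [← (marg16 ρ r).1, hb.1], by rw [← (marg16 ρ r).2, hb.2]⟩))
      exact pow_nonneg (hpos.le.trans this.1) _
  have hm : (0:ℝ) < (Nat.multinomial Finset.univ n : ℕ) := by
    exact_mod_cast Nat.multinomial_pos Finset.univ n
  have hlog := Real.log_le_log (by positivity) hle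
  rw [Real.log_mul hm.ne' (by positivity), Real.log_pow] at hlog
  have h2 := (abs_le.1 h1).1
  simp only [Fintype.card_prod, Fintype.card_fin] at h2
  push_cast at h2 ⊢
  linarith

lemma upper16 (q M : ℕ) (hq : 2 ≤ q) (hM : 0 < M) (β κ : ℝ) (hβ : 0 ≤ β) (hκ : 0 < κ) (K : ℕ) (S : ℝ)
    (hS : ∀ μ, IsBalancedMeasure q μ → phi2 q β κ μ ≤ S) :
    Real.log (∑ ρ ∈ bal2 q M, F16 q (1 - Real.exp (-β))
        (fun a => (cnt16 ρ a : ℝ) / ((M : ℝ) * q)) ^ K) ≤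
    ((M : ℝ) * q) * S + |(K:ℝ) - ((M : ℝ) * q) * (κ / 2)| *
        (- Real.log ((1 - (1 - Real.exp (-β)) / q) ^ 2))
      + (2 * (q * q) + 1) * (1 + 2 * Real.log (((M * q : ℕ) : ℝ) + 1)) := by
  set w := 1 - Real.exp (-β) with hw
  have hw0 : 0 ≤ w := by simp [hw, hβ]
  have hw1 : w < 1 := by simp [hw, Real.exp_pos]
  have hq0 : 0 < q := by omega
  have hq' : (2:ℝ) ≤ q := by exact_mod_cast hq
  have hpos : 0 < (1 - w / q) ^ 2 := by
    have : w / q < 1 := by rw [div_lt_one (by linarith)]; linarith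
    have : 0 < 1 - w / q := by linarith
    positivity
  have hM' : (0:ℝ) < M := by exact_mod_cast hM
  have hb : ∀ ρ ∈ bal2 q M, ∀ r, ∑ s, cnt16 ρ (r, s) = M ∧ ∑ s, cnt16 ρ (s, r) = M := by
    intro ρ hρ r
    have hb : (∀ s, cnt16 (fun i => (ρ i).1) s = M) ∧ (∀ s, cnt16 (fun i => (ρ i).2) s = M) := by
      simpa [bal2] using hρ
    exact ⟨by rw [← (marg16 ρ r).1, hb.1], by rw [← (marg16 ρ r).2, hb.2]⟩
  set L := Real.log (((M * q : ℕ) : ℝ) + 1) with hL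
  have hL0 : 0 ≤ L := Real.log_nonneg (by push_cast; nlinarith)
  set T := ((M : ℝ) * q) * S + |(K:ℝ) - ((M : ℝ) * q) * (κ / 2)| * (- Real.log ((1 - w / q) ^ 2))
      + (q * q + 1) * (1 + 2 * L) with hT
  -- each type contributes at most `exp T`
  have hterm : ∀ n : Fin q × Fin q → ℕ, (∀ r, ∑ s, n (r, s) = M ∧ ∑ s, n (s, r) = M) →
      (Nat.multinomial Finset.univ n : ℝ) * F16 q w (fun a => (n a : ℝ) / ((M : ℝ) * q)) ^ K
        ≤ Real.exp T := by
    intro n hn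
    have hbal := balm16 q M hq0 hM n hn
    have hF := Fbd16 q hq w hw0 hw1 _ hbal
    have hphi := hS _ hbal
    rw [phi16] at hphi
    simp only [Prod.mk.eta, ← hw] at hF hphi
    set F := F16 q w (fun a => (n a : ℝ) / ((M : ℝ) * q)) with hFdef
    have hFp : 0 < F := hpos.trans_le hF.1
    have h1 := (abs_le.1 (multi16 (M * q) (by positivity) n (summ16 q M n hn))).2
    have hm : (0:ℝ) < (Nat.multinomial Finset.univ n : ℕ) := by
      exact_mod_cast Nat.multinomial_pos Finset.univ n
    rw [← Real.log_le_iff_le_exp (by positivity), Real.log_mul hm.ne' (by positivity), Real.log_pow]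
    have hlF : |Real.log F| ≤ - Real.log ((1 - w / q) ^ 2) := by
      rw [abs_of_nonpos (Real.log_nonpos hFp.le hF.2)]
      exact neg_le_neg (Real.log_le_log hpos hF.1)
    have h3 : ((K:ℝ) - ((M : ℝ) * q) * (κ / 2)) * Real.log F ≤
        |(K:ℝ) - ((M : ℝ) * q) * (κ / 2)| * (- Real.log ((1 - w / q) ^ 2)) := by
      refine (le_abs_self _).trans ?_
      rw [abs_mul]
      exact mul_le_mul_of_nonneg_left hlF (abs_nonneg _)
    have h4 := mul_le_mul_of_nonneg_left hphi (show 0 ≤ (M:ℝ) * q by positivity)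
    simp only [Fintype.card_prod, Fintype.card_fin] at h1
    rw [← hL] at h1
    push_cast at h1
    rw [hT]
    nlinarith
  have hmain : ∑ ρ ∈ bal2 q M, F16 q w (fun a => (cnt16 ρ a : ℝ) / ((M : ℝ) * q)) ^ K ≤
      (((M * q : ℕ) : ℝ) + 1) ^ (q * q) * Real.exp T := by
    have := Finset.sum_comp (s := bal2 q M)
      (fun n : Fin q × Fin q → ℕ => F16 q w (fun a => (n a : ℝ) / ((M : ℝ) * q)) ^ K)
      (fun ρ => cnt16 ρ)
    rw [this]
    have hc : ((bal2 q M).image (fun ρ => cnt16 ρ)).card ≤ (M * q + 1) ^ (q * q) := by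
      have : (bal2 q M).image (fun ρ => cnt16 ρ) ⊆
          Fintype.piFinset (fun _ : Fin q × Fin q => Finset.range (M * q + 1)) := by
        intro n hn
        obtain ⟨ρ, _, rfl⟩ := Finset.mem_image.1 hn
        rw [Fintype.mem_piFinset]
        intro a
        rw [Finset.mem_range, Nat.lt_succ_iff, cnt16]
        exact (Finset.card_le_univ _).trans (by simp)
      refine (Finset.card_le_card this).trans ?_
      simp
    refine (Finset.sum_le_card_nsmul _ _ (Real.exp T) ?_).trans ?_
    · intro n hn
      obtain ⟨ρ, hρ, rfl⟩ := Finset.mem_image.1 hn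
      refine le_trans ?_ (hterm (cnt16 ρ) (hb ρ hρ))
      have hF := Fbd16 q hq w hw0 hw1 _ (balm16 q M hq0 hM _ (hb ρ hρ))
      rw [nsmul_eq_mul]
      refine mul_le_mul_of_nonneg_right ?_ (pow_nonneg (hpos.le.trans hF.1) _)
      rw [← count16 (M * q) (cnt16 ρ) (cnt_sum16 ρ)]
      norm_cast
      refine Finset.card_le_card ?_
      intro τ hτ
      have := (Finset.mem_filter.1 hτ).2
      simp only [Finset.mem_filter, Finset.mem_univ, true_and]
      intro a
      exact congrFun this a
    · rw [nsmul_eq_mul]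
      refine mul_le_mul_of_nonneg_right ?_ (Real.exp_pos T).le
      exact_mod_cast hc
  have hlpos : 0 ≤ - Real.log ((1 - w / q) ^ 2) := by
    rw [neg_nonneg]
    refine Real.log_nonpos hpos.le ?_
    have h1 : w / q ≤ 1 := by rw [div_le_one (by linarith)]; linarith
    have h2 : 0 ≤ w / q := by positivity
    nlinarith
  have hfin : Real.log (∑ ρ ∈ bal2 q M, F16 q w (fun a => (cnt16 ρ a : ℝ) / ((M : ℝ) * q)) ^ K)
      ≤ (q * q) * L + T := by
    have hne : 0 < ∑ ρ ∈ bal2 q M, F16 q w (fun a => (cnt16 ρ a : ℝ) / ((M : ℝ) * q)) ^ K := by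
      obtain ⟨n, hn, -⟩ := approx16 q hq0 (fun r s => (1 / (q:ℝ)) * (1/q)) ⟨fun _ _ => by positivity,
        fun _ => by simp; field_simp, fun _ => by simp; field_simp⟩
      have hcc := count16 (M * q) (n M) (summ16 q M _ (hn M))
      have hp := Nat.multinomial_pos Finset.univ (n M)
      rw [← hcc, Finset.card_pos] at hp
      obtain ⟨ρ, hρ⟩ := hp
      have : ∀ a, cnt16 ρ a = n M a := by simpa using hρ
      refine Finset.sum_pos (fun ρ hρ => ?_) ⟨ρ, ?_⟩
      · have hF := Fbd16 q hq w hw0 hw1 _ (balm16 q M hq0 hM _ (hb ρ hρ))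
        exact pow_pos (hpos.trans_le hF.1) _
      · simp only [bal2, Finset.mem_filter, Finset.mem_univ, true_and, (marg16 ρ _).1,
          (marg16 ρ _).2, this]
        exact ⟨fun s => (hn M s).1, fun s => (hn M s).2⟩
    have := Real.log_le_log hne hmain
    rwa [Real.log_mul (by positivity) (Real.exp_pos T).ne', Real.log_exp, Real.log_pow,
      ← hL, Nat.cast_mul] at this
  have : (q:ℝ) * q * L ≤ q * q * (1 + 2 * L) :=
    mul_le_mul_of_nonneg_left (by linarith) (by positivity)
  rw [hT] at hfin
  nlinarith

/-- large deviation limits of the first and second conditional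
moments of the constrained partition function. -/
theorem statement16 (q : ℕ) (hq : 2 ≤ q) (β κ c : ℝ)
    (hβ : 0 ≤ β) (hκ : 0 < κ) (hc : 0 < c)
    (M K : ℕ → ℕ)
    (hM : Filter.Tendsto M Filter.atTop Filter.atTop)
    (hK : Filter.Tendsto (fun n => (K n : ℝ) / ((M n : ℝ) * q))
      Filter.atTop (nhds (κ / 2))) :
    Filter.Tendsto (fun n => (1 / ((M n : ℝ) * q)) *
        Real.log (condE (M n * q) c (K n)
          (fun J => Ztilde q (M n) β (fun a b => (J a b : ℝ)))))
      Filter.atTop (nhds (potts.annealed q β κ)) ∧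
    Filter.Tendsto (fun n => (1 / ((M n : ℝ) * q)) *
        Real.log (condE (M n * q) c (K n)
          (fun J => (Ztilde q (M n) β (fun a b => (J a b : ℝ))) ^ 2)))
      Filter.atTop
      (nhds (sSup {y : ℝ | ∃ μ : Fin q → Fin q → ℝ,
        IsBalancedMeasure q μ ∧ y = phi2 q β κ μ})) := by
  have hq0 : 0 < q := by omega
  have hq' : (2:ℝ) ≤ q := by exact_mod_cast hq
  have hqp : (0:ℝ) < q := by linarith
  set w := 1 - Real.exp (-β) with hw
  have hw0 : 0 ≤ w := by simp [hw, hβ]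
  have hw1 : w < 1 := by simp [hw, Real.exp_pos]
  have hpos1 : 0 < 1 - w / q := by
    have : w / q < 1 := by rw [div_lt_one (by linarith)]; linarith
    linarith
  have hMpos : ∀ᶠ n in atTop, 0 < M n := hM.eventually (eventually_gt_atTop 0)
  have hMq : Tendsto (fun n => M n * q) atTop atTop := hM.atTop_mul_const' hq0
  have herr : ∀ C : ℝ, Tendsto (fun n => C * ((1 + 2 * Real.log (((M n * q : ℕ) : ℝ) + 1)) /
      ((M n * q : ℕ) : ℝ))) atTop (nhds 0) := by
    intro C
    simpa using (err16.comp hMq).const_mul C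
  constructor
  · have hlim : Tendsto (fun n => Real.log q + (K n : ℝ) / ((M n : ℝ) * q) * Real.log (1 - w / q))
        atTop (nhds (potts.annealed q β κ)) := (hK.mul_const _).const_add _
    have hd : Tendsto (fun n => (1 / ((M n : ℝ) * q)) *
        Real.log (condE (M n * q) c (K n)
          (fun J => Ztilde q (M n) β (fun a b => (J a b : ℝ)))) -
        (Real.log q + (K n : ℝ) / ((M n : ℝ) * q) * Real.log (1 - w / q))) atTop (nhds 0) := by
      refine squeeze_zero_norm' ?_ (herr (q + 1))
      filter_upwards [hMpos] with n hn
      have hn' : (0:ℝ) < M n := by exact_mod_cast hn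
      rw [first16 q (M n) hq0 hn β c hc (K n), ← hw]
      have hm : (0:ℝ) < (Nat.multinomial Finset.univ (fun _ : Fin q => M n) : ℕ) := by
        exact_mod_cast Nat.multinomial_pos Finset.univ _
      rw [Real.log_mul hm.ne' (by positivity), Real.log_pow]
      have h1 := multi16 (M n * q) (by positivity) (fun _ : Fin q => M n) (by simp [mul_comm])
      have h2 : ent16 (fun _ : Fin q => (M n : ℝ) / ((M n * q : ℕ) : ℝ)) = Real.log q := by
        have : (M n : ℝ) / ((M n * q : ℕ) : ℝ) = (q:ℝ)⁻¹ := by push_cast; field_simp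
        rw [ent16]
        simp only [this, Real.log_inv]
        simp
        field_simp
      rw [h2, Fintype.card_fin] at h1
      have hNp : (0:ℝ) < ((M n * q : ℕ) : ℝ) := by push_cast; positivity
      rw [Real.norm_eq_abs, ← mul_div_assoc, le_div_iff₀ hNp]
      refine le_trans (le_of_eq ?_) h1
      rw [← abs_of_pos hNp, ← abs_mul, abs_of_pos hNp]
      congr 1
      push_cast
      field_simp
      ring
    have := hd.add hlim
    simpa using this
  · set S := sSup {y : ℝ | ∃ μ : Fin q → Fin q → ℝ, IsBalancedMeasure q μ ∧ y = phi2 q β κ μ} with hSdef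
    have hbdd := bddphi16 q hq β κ hβ hκ
    have hne : {y : ℝ | ∃ μ : Fin q → Fin q → ℝ, IsBalancedMeasure q μ ∧ y = phi2 q β κ μ}.Nonempty :=
      ⟨_, (fun r s => (1 / (q:ℝ)) * (1/q)), ⟨fun _ _ => by positivity,
        fun _ => by simp; field_simp, fun _ => by simp; field_simp⟩, rfl⟩
    have hS : ∀ μ, IsBalancedMeasure q μ → phi2 q β κ μ ≤ S := fun μ hμ =>
      le_csSup hbdd ⟨μ, hμ, rfl⟩
    rw [tendsto_order]
    constructor
    · intro a ha
      obtain ⟨_, ⟨μ, hμ, rfl⟩, hlt⟩ := exists_lt_of_lt_csSup hne ha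
      obtain ⟨n, hn, hlim⟩ := approx16 q hq0 μ hμ
      have hF := Fbd16 q hq w hw0 hw1 μ hμ
      have hFp : 0 < F16 q w (fun a => μ a.1 a.2) := (by positivity : 0 < (1 - w/q)^2).trans_le hF.1
      have hl : ∀ a, Tendsto (fun i => (n (M i) a : ℝ) / ((M i : ℝ) * q)) atTop
        (nhds (μ a.1 a.2)) := fun a => (hlim a).comp hM
      have he : Tendsto (fun i => ent16 (fun a => (n (M i) a : ℝ) / ((M i : ℝ) * q))) atTop
          (nhds (ent16 (fun a : Fin q × Fin q => μ a.1 a.2))) := by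
        unfold ent16
        refine (tendsto_finsetSum _ fun a _ => ?_).neg
        exact (Real.continuous_mul_log.tendsto _).comp (hl a)
      have hFl : Tendsto (fun i => F16 q w (fun a => (n (M i) a : ℝ) / ((M i : ℝ) * q))) atTop
          (nhds (F16 q w (fun a : Fin q × Fin q => μ a.1 a.2))) := by
        unfold F16
        exact ((tendsto_finsetSum _ fun a _ => (hl a).pow 2).const_mul _).const_add _
      have htot := (he.add (hK.mul (hFl.log hFp.ne'))).sub (herr (q * q + 1))
      rw [sub_zero, hw, ← phi16] at htot
      filter_upwards [htot.eventually (lt_mem_nhds hlt), hMpos] with i hi hMi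
      refine hi.trans_le ?_
      have hMi' : (0:ℝ) < M i := by exact_mod_cast hMi
      rw [second16 q (M i) hq0 hMi β c hc (K i), ← hw]
      have := lower16 q (M i) hq hMi w hw0 hw1 (K i) (n (M i)) (hn (M i))
      rw [one_div_mul_eq_div, le_div_iff₀ (by positivity)]
      refine le_trans (le_of_eq ?_) this
      push_cast
      field_simp
    · intro a ha
      set B := - Real.log ((1 - w / q) ^ 2) with hB
      have hKd : Tendsto (fun n => |(K n : ℝ) / ((M n : ℝ) * q) - κ / 2| * B) atTop (nhds 0) := by
        have := ((hK.sub_const (κ / 2)).abs).mul_const B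
        simpa using this
      have htot := (hKd.const_add S).add (herr (2 * (q * q) + 1))
      rw [add_zero, add_zero] at htot
      filter_upwards [htot.eventually (gt_mem_nhds ha), hMpos] with i hi hMi
      refine lt_of_le_of_lt ?_ hi
      have hMi' : (0:ℝ) < M i := by exact_mod_cast hMi
      have hNp : (0:ℝ) < (M i : ℝ) * q := by positivity
      rw [second16 q (M i) hq0 hMi β c hc (K i), ← hw]
      have := upper16 q (M i) hq hMi β κ hβ hκ (K i) S hS
      rw [← hw, ← hB] at this
      rw [one_div_mul_eq_div, div_le_iff₀ hNp]
      refine this.trans (le_of_eq ?_)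
      have e : |(K i : ℝ) - (M i : ℝ) * q * (κ / 2)| =
          |(K i : ℝ) / ((M i : ℝ) * q) - κ / 2| * ((M i : ℝ) * q) := by
        rw [← abs_of_pos hNp, ← abs_mul, abs_of_pos hNp]
        congr 1
        field_simp
      rw [e]
      push_cast
      field_simp
end

section
/- Let q = 2, β ≥ 0, c > 0, and x = (1−e^{−β})/(1+e^{−β}). If c x² ≤ 1, then max_{μ ∈ M_*([2]²)} φ^(2)(β,c,2,μ) = 2 𝒫(β,c,2), and the maximum is attained at the uniform measure on [2]². -/
open MeasureTheory Filter

theorem aux_log (m : ℝ) (h0 : 0 ≤ m) (h1 : m < 1) :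
    2 * m ≤ Real.log (1 + m) - Real.log (1 - m) := by
  have h := Real.hasSum_log_sub_log_of_abs_lt_one (x := m) (by rw [abs_of_nonneg h0]; exact h1)
  have := sum_le_hasSum {0} (fun i _ => by positivity) h
  simpa using this

theorem aux_ent0 (m : ℝ) (h0 : 0 ≤ m) (h1 : m ≤ 1) :
    m ^ 2 ≤ (1 + m) * Real.log (1 + m) + (1 - m) * Real.log (1 - m) := by
  let f : ℝ → ℝ := fun m => (1 + m) * Real.log (1 + m) + (1 - m) * Real.log (1 - m) - m ^ 2
  have hcont : Continuous f := by
    have h := Real.continuous_mul_log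
    have ha : Continuous fun m : ℝ => (1 + m) * Real.log (1 + m) :=
      h.comp (g := fun x : ℝ => x * Real.log x) (f := fun m : ℝ => 1 + m) (by fun_prop)
    have hb : Continuous fun m : ℝ => (1 - m) * Real.log (1 - m) :=
      h.comp (g := fun x : ℝ => x * Real.log x) (f := fun m : ℝ => 1 - m) (by fun_prop)
    exact (ha.add hb).sub (by fun_prop)
  have hmono : MonotoneOn f (Set.Icc 0 1) := by
    have hd : ∀ x ∈ Set.Ioo (0 : ℝ) 1,
        HasDerivAt f (Real.log (1 + x) - Real.log (1 - x) - 2 * x) x := by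
      intro x hx
      have e1 : HasDerivAt (fun m : ℝ => 1 + m) 1 x := by
        simpa using (hasDerivAt_id x).const_add 1
      have e2 : HasDerivAt (fun m : ℝ => 1 - m) (-1) x := by
        simpa using (hasDerivAt_id x).const_sub 1
      have p1 : 1 + x ≠ 0 := by linarith [hx.1]
      have p2 : 1 - x ≠ 0 := by linarith [hx.2]
      have := ((e1.mul (e1.log p1)).add (e2.mul (e2.log p2))).sub (hasDerivAt_pow 2 x)
      refine this.congr_deriv ?_
      field_simp
      norm_num
      ring
    apply monotoneOn_of_deriv_nonneg (convex_Icc 0 1) hcont.continuousOn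
    · intro x hx
      rw [interior_Icc] at hx
      exact (hd x hx).differentiableAt.differentiableWithinAt
    · intro x hx
      rw [interior_Icc] at hx
      rw [(hd x hx).deriv]
      linarith [aux_log x hx.1.le hx.2]
  have := hmono (a := 0) (b := m) (by simp) ⟨h0, h1⟩ h0
  simp only [f] at this
  norm_num at this
  linarith

theorem aux_ent (m : ℝ) (h0 : -1 ≤ m) (h1 : m ≤ 1) :
    m ^ 2 ≤ (1 + m) * Real.log (1 + m) + (1 - m) * Real.log (1 - m) := by
  rcases le_total 0 m with h | h
  · exact aux_ent0 m h h1
  · have := aux_ent0 (-m) (by linarith) (by linarith)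
    rw [neg_sq, sub_neg_eq_add, ← sub_eq_add_neg] at this
    linarith

theorem aux_mul (y : ℝ) : y / 4 * Real.log (y / 4) = y / 4 * (Real.log y - 2 * Real.log 2) := by
  by_cases h : y = 0
  · simp [h]
  · rw [Real.log_div h (by norm_num), show (4 : ℝ) = 2 ^ 2 by norm_num, Real.log_pow]
    norm_num

theorem aux_phi (β c m : ℝ) (μ : Fin 2 → Fin 2 → ℝ) (h00 : μ 0 0 = (1 + m) / 4)
    (h01 : μ 0 1 = (1 - m) / 4) (h10 : μ 1 0 = (1 - m) / 4) (h11 : μ 1 1 = (1 + m) / 4) :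
    phi2 2 β c μ = 2 * potts.annealed 2 β c
      - ((1 + m) * Real.log (1 + m) + (1 - m) * Real.log (1 - m)) / 2
      + c / 2 * Real.log (1 + ((1 - Real.exp (-β)) / (1 + Real.exp (-β))) ^ 2 * m ^ 2) := by
  have he := Real.exp_pos (-β)
  unfold phi2 potts.annealed
  simp only [Fin.sum_univ_two, h00, h01, h10, h11, aux_mul]
  push_cast
  generalize Real.exp (-β) = e at *
  have : 1 - 2 * (1 - e) / 2 + (1 - e) ^ 2 * (((1 + m) / 4) ^ 2 + ((1 - m) / 4) ^ 2 +
      (((1 - m) / 4) ^ 2 + ((1 + m) / 4) ^ 2))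
      = (1 - (1 - e) / 2) ^ 2 * (1 + ((1 - e) / (1 + e)) ^ 2 * m ^ 2) := by
    field_simp
    ring
  rw [this, Real.log_mul (by apply ne_of_gt; apply pow_pos; linarith) (by positivity), Real.log_pow]
  push_cast
  ring

/-- for `q = 2` and `c x² ≤ 1` with `x = (1-e^{-β})/(1+e^{-β})`,
the maximum of `φ⁽²⁾` over `M_*([2]²)` equals `2𝒫(β,c,2)` and is attained at
the uniform measure. -/
theorem statement17 (β c : ℝ) (hβ : 0 ≤ β) (hc : 0 < c)
    (hx : c * ((1 - Real.exp (-β)) / (1 + Real.exp (-β))) ^ 2 ≤ 1) :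
    (∀ μ : Fin 2 → Fin 2 → ℝ, IsBalancedMeasure 2 μ →
        phi2 2 β c μ ≤ 2 * potts.annealed 2 β c) ∧
      phi2 2 β c (fun _ _ => 1 / 4) = 2 * potts.annealed 2 β c := by
  constructor
  · rintro μ ⟨hp, hr, hl⟩
    simp only [Fin.sum_univ_two] at hr hl
    push_cast at hr hl
    have r0 := hr 0
    have r1 := hr 1
    have l0 := hl 0
    have p00 := hp 0 0
    have p01 := hp 0 1
    rw [aux_phi β c (4 * μ 0 0 - 1) μ (by ring) (by linarith) (by linarith) (by linarith)]
    have hm := aux_ent (4 * μ 0 0 - 1) (by linarith) (by linarith)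
    generalize 4 * μ 0 0 - 1 = m at *
    generalize (1 - Real.exp (-β)) / (1 + Real.exp (-β)) = x at *
    have h1 := Real.log_le_sub_one_of_pos (x := 1 + x ^ 2 * m ^ 2) (by positivity)
    have h2 := mul_le_mul_of_nonneg_left h1 (by positivity : 0 ≤ c / 2)
    have h3 := mul_le_mul_of_nonneg_right hx (sq_nonneg m)
    linarith
  · rw [aux_phi β c 0 _ (by norm_num) (by norm_num) (by norm_num) (by norm_num)]
    simp
end
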